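/- For n ≥ 3 and integers k with n/2 < k ≤ n−1, let q_n(k,n−k) = [(n−k)^{n−k−1}/(n−k)!]·[k^{k−1}/k!]·[(n−2)!/n^{n−3}], the splitting probabilities of the cut-tree of a uniform Cayley tree with n vertices. Then for every continuous f : [1/2,1] → ℝ, √n·Σ_{n/2<k≤n−1} q_n(k,n−k)·(1−k/n)·f(k/n) → (1/2)·∫_{1/2}^{1} (1−x)·f(x)·√2/(√π·x^{3/2}(1−x)^{3/2}) dx as n → ∞. That is, (q_n^{Cut,Cayley}) satisfies Hypothesis (H) with γ = 1/2 and ν = ν_Br/2. -/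

import Mathlib

open MeasureTheory Filter Real Set

/-- The splitting probabilities of the cut-tree of a uniform Cayley tree with `n` vertices:
`q_n(k,n−k) = [(n−k)^{n−k−1}/(n−k)!]·[k^{k−1}/k!]·[(n−2)!/n^{n−3}]` for `n/2 < k ≤ n−1`. -/
noncomputable def cutQ (n k : ℕ) : ℝ :=
  (((n - k : ℕ) : ℝ) ^ (n - k - 1) / (Nat.factorial (n - k) : ℝ)) *
    ((k : ℝ) ^ (k - 1) / (Nat.factorial k : ℝ)) * ((Nat.factorial (n - 2) : ℝ) / (n : ℝ) ^ (n - 3))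

/-!
Write `b` for the mass function of the Borel distribution. Up to the factor `n / (n - 1)`,
`cutQ n k` is `b k * b (n - k) / b n`. Stirling's formula says that `m ^ (3 / 2) * b m` converges to
`1 / √(2π)`, so `n ^ (3 / 2) * cutQ n k` converges to half the density of `ν_Br` at `x` when
`k / n → x ∈ (0, 1)`, and it is bounded by this density at `k / n`. Since `√n = n ^ (3 / 2) / n`,
the sum is the integral over `(0, 1)` of a function constant on each `[k / n, (k + 1) / n)`, and
dominated convergence applies: a test function bounded by a multiple of `x * (1 - x)` leaves an
integrable majorant, a multiple of `x ^ (-1 / 2) * (1 - x) ^ (-1 / 2)`.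
-/

open scoped Nat Topology

section RiemannSums

variable {E : Type*} [NormedAddCommGroup E] [NormedSpace ℝ E]

theorem sum_range_eq_integral_floor [CompleteSpace E] (g : ℕ → E) (n : ℕ) :
    ∑ k ∈ Finset.range n, g k = ∫ y in (0 : ℝ)..n, g ⌊y⌋₊ := by
  have floor_eqOn (k : ℕ) : EqOn (fun y : ℝ ↦ g ⌊y⌋₊) (fun _ ↦ g k) (Ico k (k + 1 : ℕ)) :=
    fun y hy ↦ congrArg g (Nat.floor_eq_on_Ico k y (by simpa using hy))
  have le_succ (k : ℕ) : (k : ℝ) ≤ (k + 1 : ℕ) := by simp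
  rw [← Nat.cast_zero,
    ← intervalIntegral.sum_integral_adjacent_intervals (a := fun k : ℕ ↦ (k : ℝ))]
  · refine Finset.sum_congr rfl fun k _ ↦ ?_
    rw [intervalIntegral.integral_of_le (le_succ k), ← integral_Ico_eq_integral_Ioc,
      setIntegral_congr_fun measurableSet_Ico (floor_eqOn k)]
    simp
  · intro k _
    rw [intervalIntegrable_iff_integrableOn_Ico_of_le (le_succ k),
      integrableOn_congr_fun (floor_eqOn k) measurableSet_Ico]
    simp

theorem sum_range_eq_integral_floor_mul [CompleteSpace E] (g : ℕ → E) (n : ℕ) :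
    ∑ k ∈ Finset.range n, g k = ∫ x in (0 : ℝ)..1, (n : ℝ) • g ⌊n * x⌋₊ := by
  rw [intervalIntegral.integral_smul, intervalIntegral.smul_integral_comp_mul_left (fun y ↦ g ⌊y⌋₊),
    mul_zero, mul_one, sum_range_eq_integral_floor]

theorem tendsto_sum_range_of_dominated [CompleteSpace E] {g : ℕ → ℕ → E} {G : ℝ → E}
    (bound : ℝ → ℝ) (bound_integrable : IntervalIntegrable bound volume 0 1)
    (h_bound : ∀ᶠ n : ℕ in atTop, ∀ x ∈ Ioo (0 : ℝ) 1, ‖(n : ℝ) • g n ⌊n * x⌋₊‖ ≤ bound x)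
    (h_lim : ∀ᵐ x : ℝ, x ∈ Ioo (0 : ℝ) 1 →
      Tendsto (fun n : ℕ ↦ (n : ℝ) • g n ⌊n * x⌋₊) atTop (𝓝 (G x))) :
    Tendsto (fun n ↦ ∑ k ∈ Finset.range n, g n k) atTop (𝓝 (∫ x in (0 : ℝ)..1, G x)) := by
  simp only [sum_range_eq_integral_floor_mul]
  have mem_Ioo {x : ℝ} (hx : x ∈ uIoc (0 : ℝ) 1) (hx1 : x ≠ 1) : x ∈ Ioo (0 : ℝ) 1 := by
    rw [uIoc_of_le zero_le_one] at hx
    exact ⟨hx.1, hx.2.lt_of_ne hx1⟩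
  refine intervalIntegral.tendsto_integral_filter_of_dominated_convergence bound
    (.of_forall fun n ↦ ?_) ?_ bound_integrable ?_
  · have : StronglyMeasurable (g n) := .of_discrete
    exact ((this.comp_measurable (by fun_prop)).const_smul _).aestronglyMeasurable
  · filter_upwards [h_bound] with n hn
    filter_upwards [Measure.ae_ne volume 1] with x hx1 hx using hn x (mem_Ioo hx hx1)
  · filter_upwards [h_lim, Measure.ae_ne volume 1] with x hlim hx1 hx using hlim (mem_Ioo hx hx1)

end RiemannSums

theorem intervalIntegrable_rpow_mul_one_sub_rpow {a b : ℝ} (ha : -1 < a) (hb : -1 < b) :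
    IntervalIntegrable (fun x : ℝ ↦ x ^ a * (1 - x) ^ b) volume 0 1 := by
  have h := (Complex.betaIntegral_convergent (u := (a + 1 : ℝ)) (v := (b + 1 : ℝ))
    (by simpa using by linarith) (by simpa using by linarith)).norm
  refine h.congr fun x hx ↦ ?_
  rw [uIoc_of_le zero_le_one] at hx
  have hx1 : 0 ≤ 1 - x := sub_nonneg.2 hx.2
  have cast_eq : ((x : ℂ) ^ (((a + 1 : ℝ) : ℂ) - 1) * (1 - (x : ℂ)) ^ (((b + 1 : ℝ) : ℂ) - 1)) =
      (x ^ a * (1 - x) ^ b : ℝ) := by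
    simp [Complex.ofReal_cpow hx.1.le, Complex.ofReal_cpow hx1]
  simp only [cast_eq, Complex.norm_real]
  exact norm_of_nonneg (mul_nonneg (rpow_nonneg hx.1.le a) (rpow_nonneg hx1 b))

theorem continuousAt_indicator_of_notMem_frontier {X Y : Type*} [TopologicalSpace X]
    [TopologicalSpace Y] [Zero Y] {s : Set X} {f : X → Y} {x : X} (hx : x ∉ frontier s)
    (hf : x ∈ s → ContinuousAt f x) : ContinuousAt (s.indicator f) x := by
  by_cases hs : s ∈ 𝓝 x
  · exact (hf (mem_of_mem_nhds hs)).congr (eqOn_indicator.symm.eventuallyEq_of_mem hs)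
  · have compl_mem : sᶜ ∈ 𝓝 x := by
      rw [← mem_interior_iff_mem_nhds, interior_compl, mem_compl_iff,
        closure_eq_interior_union_frontier]
      exact fun h ↦ h.elim (fun h ↦ hs (mem_interior_iff_mem_nhds.1 h)) hx
    exact continuousAt_const.congr (eqOn_indicator'.symm.eventuallyEq_of_mem compl_mem)

theorem half_le_floor_mul_div {x : ℝ} {n : ℕ} (h : ⌊n * x⌋₊ ≠ 0) : x / 2 ≤ ⌊n * x⌋₊ / n := by
  have hn : (0 : ℝ) < n := Nat.cast_pos.2 (Nat.pos_of_ne_zero fun hn ↦ h (by simp [hn]))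
  have one_le : (1 : ℝ) ≤ ⌊n * x⌋₊ := by exact_mod_cast Nat.one_le_iff_ne_zero.2 h
  rw [div_le_div_iff₀ two_pos hn]
  linarith [Nat.lt_floor_add_one (n * x)]

theorem floor_mul_div_le {x : ℝ} (hx : 0 ≤ x) (n : ℕ) : (⌊n * x⌋₊ : ℝ) / n ≤ x :=
  div_le_of_le_mul₀ n.cast_nonneg hx <|
    (Nat.floor_le (by positivity)).trans_eq (mul_comm (n : ℝ) x)

theorem tendsto_floor_mul_div {x : ℝ} (hx : 0 ≤ x) :
    Tendsto (fun n : ℕ ↦ (⌊n * x⌋₊ : ℝ) / n) atTop (𝓝 x) := by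
  simpa only [mul_comm, Function.comp_def] using
    (tendsto_nat_floor_mul_div_atTop hx).comp tendsto_natCast_atTop_atTop

theorem tendsto_atTop_of_tendsto_div {k : ℕ → ℕ} {x : ℝ} (hx : 0 < x)
    (hk : Tendsto (fun n ↦ (k n : ℝ) / n) atTop (𝓝 x)) : Tendsto k atTop atTop :=
  tendsto_natCast_atTop_iff.1 (tendsto_natCast_atTop_atTop.num hx hk)

theorem mul_sqrt_eq_rpow {x : ℝ} (hx : 0 ≤ x) : x * √x = x ^ (3 / 2 : ℝ) := by
  rw [sqrt_eq_rpow, ← rpow_one_add' hx (by norm_num)]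
  norm_num

theorem stirlingSeq_pos {n : ℕ} (hn : n ≠ 0) : 0 < Stirling.stirlingSeq n :=
  (sqrt_pos.2 pi_pos).trans_le (Stirling.sqrt_pi_le_stirlingSeq hn)

theorem stirlingSeq_le_two : ∀ n : ℕ, Stirling.stirlingSeq n ≤ 2
  | 0 => by simp
  | n + 1 => by
    have one_le : Stirling.stirlingSeq (n + 1) ≤ Stirling.stirlingSeq 1 :=
      Stirling.stirlingSeq'_antitone n.zero_le
    refine one_le.trans ?_
    rw [Stirling.stirlingSeq_one, div_le_iff₀ (by positivity)]
    have : 1.4 ≤ √2 := le_sqrt_of_sq_le (by norm_num)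
    linarith [exp_one_lt_d9]

/-- The mass function `exp (-m) * m ^ (m - 1) / m !` of the Borel distribution with parameter `1`,
the law of the total progeny of a critical Poisson Galton–Watson tree. The splitting probabilities
`cutQ n` are built from it. At `m = 0`, which the distribution does not charge, the formula gives
the junk value `1`. -/
noncomputable def borelMass (m : ℕ) : ℝ :=
  exp (-m) * m ^ (m - 1) / m !

theorem borelMass_eq_inv_stirlingSeq {m : ℕ} (hm : m ≠ 0) :
    borelMass m = (√2 * (m : ℝ) ^ (3 / 2 : ℝ) * Stirling.stirlingSeq m)⁻¹ := by
  have hm0 : (0 : ℝ) < m := by positivity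
  have pow_eq : (m : ℝ) ^ m = m ^ (m - 1) * m := (pow_sub_one_mul hm _).symm
  have exp_eq : exp 1 ^ m = exp m := by rw [← exp_nat_mul, mul_one]
  rw [borelMass, Stirling.stirlingSeq, ← mul_sqrt_eq_rpow hm0.le, div_pow, pow_eq, exp_eq, exp_neg,
    sqrt_mul zero_le_two]
  field_simp

theorem cutQ_eq_borelMass {n k : ℕ} (hn : 3 ≤ n) (hk : k ≤ n) :
    cutQ n k = n / (n - 1) * (borelMass k * borelMass (n - k) / borelMass n) := by
  have factorial_div_pow : ((n - 2)! : ℝ) / n ^ (n - 3) = n / (n - 1) * (n ! / n ^ (n - 1)) := by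
    obtain ⟨m, rfl⟩ := Nat.exists_eq_add_of_le' hn
    rw [show m + 3 - 2 = m + 1 from rfl, show m + 3 - 3 = m from rfl,
      show m + 3 - 1 = m + 2 from rfl, Nat.factorial_succ (m + 2), Nat.factorial_succ (m + 1)]
    have : (m : ℝ) + 3 - 1 = m + 2 := by ring
    push_cast [this]
    field_simp
    ring
  have exp_eq : exp (-(n : ℝ)) = exp (-k) * exp (-(n - k : ℕ)) := by
    rw [← exp_add, Nat.cast_sub hk]
    ring_nf
  rw [cutQ, factorial_div_pow]
  unfold borelMass
  rw [exp_eq]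
  field_simp

theorem cutQ_nonneg (n k : ℕ) : 0 ≤ cutQ n k := by
  unfold cutQ
  positivity

/-- The density of the Brownian dislocation measure `ν_Br` in the first coordinate. It is symmetric
in `x` and `1 - x` and is used on all of `(0, 1)`, not only on `(1/2, 1)`. -/
noncomputable def brownianDensity (x : ℝ) : ℝ :=
  √2 / (√π * x ^ (3 / 2 : ℝ) * (1 - x) ^ (3 / 2 : ℝ))

theorem continuousAt_brownianDensity {x : ℝ} (hx : x ∈ Ioo (0 : ℝ) 1) :
    ContinuousAt brownianDensity x := by
  have hx0 : 0 < x := hx.1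
  have hx1 : 0 < 1 - x := sub_pos.2 hx.2
  unfold brownianDensity
  fun_prop (disch := first | positivity | (left; positivity))

theorem brownianDensity_nonneg {x : ℝ} (hx : x ∈ Icc (0 : ℝ) 1) : 0 ≤ brownianDensity x := by
  have hx0 : 0 ≤ x := hx.1
  have hx1 : 0 ≤ 1 - x := sub_nonneg.2 hx.2
  unfold brownianDensity
  positivity

theorem brownianDensity_mul_self_mul_one_sub {x : ℝ} (hx : x ∈ Ioo (0 : ℝ) 1) :
    brownianDensity x * (x * (1 - x)) =
      √2 / √π * (x ^ (-(1 / 2) : ℝ) * (1 - x) ^ (-(1 / 2) : ℝ)) := by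
  have rpow_three_halves {y : ℝ} (hy : 0 < y) : y ^ (3 / 2 : ℝ) = y / y ^ (-(1 / 2) : ℝ) := by
    rw [← rpow_one_sub' hy.le (by norm_num)]
    norm_num
  have hx0 : 0 < x := hx.1
  have hx1 : 0 < 1 - x := sub_pos.2 hx.2
  rw [brownianDensity, rpow_three_halves hx0, rpow_three_halves hx1]
  field_simp

/-- The ratio of `n ^ (3 / 2) * cutQ n k` to `brownianDensity (k / n) / 2`, as a product of values
of the Stirling sequence. -/
noncomputable def cutQRatio (n k : ℕ) : ℝ :=
  n / (n - 1) * (√π * Stirling.stirlingSeq n /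
    (Stirling.stirlingSeq k * Stirling.stirlingSeq (n - k)))

theorem rpow_mul_cutQ {n k : ℕ} (hn : 3 ≤ n) (hk : k ≠ 0) (hkn : k < n) :
    (n : ℝ) ^ (3 / 2 : ℝ) * cutQ n k = cutQRatio n k * (brownianDensity (k / n) / 2) := by
  have hn0 : (0 : ℝ) < n := by positivity
  have hkn0 : n - k ≠ 0 := Nat.sub_ne_zero_of_lt hkn
  have one_sub_eq : 1 - (k : ℝ) / n = (n - k : ℕ) / n := by
    rw [Nat.cast_sub hkn.le]
    field_simp
  rw [cutQ_eq_borelMass hn hkn.le, borelMass_eq_inv_stirlingSeq hk,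
    borelMass_eq_inv_stirlingSeq hkn0, borelMass_eq_inv_stirlingSeq (by lia), cutQRatio,
    brownianDensity, one_sub_eq, div_rpow k.cast_nonneg hn0.le, div_rpow (n - k).cast_nonneg hn0.le]
  have := stirlingSeq_pos hk
  have := stirlingSeq_pos hkn0
  field_simp
  norm_num

theorem cutQRatio_le_two {n k : ℕ} (hn : 3 ≤ n) (hk : k ≠ 0) (hkn : k < n) : cutQRatio n k ≤ 2 := by
  have hn' : (3 : ℝ) ≤ n := by exact_mod_cast hn
  have sqrt_pi_ge : 3 / 2 ≤ √π := le_sqrt_of_sq_le (by linarith [pi_gt_three])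
  have div_le : (n : ℝ) / (n - 1) ≤ 3 / 2 := by
    rw [div_le_iff₀ (by linarith)]
    linarith
  have stirling_le : √π * Stirling.stirlingSeq n /
      (Stirling.stirlingSeq k * Stirling.stirlingSeq (n - k)) ≤ √π * 2 / (√π * √π) := by
    have hSk := Stirling.sqrt_pi_le_stirlingSeq hk
    have hSnk := Stirling.sqrt_pi_le_stirlingSeq (Nat.sub_ne_zero_of_lt hkn)
    have hSn := stirlingSeq_le_two n
    have := stirlingSeq_pos hk
    gcongr
  calc cutQRatio n k ≤ 3 / 2 * (√π * 2 / (√π * √π)) := by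
        unfold cutQRatio
        have := stirlingSeq_pos hk
        have := stirlingSeq_pos (show n ≠ 0 by lia)
        have := stirlingSeq_pos (Nat.sub_ne_zero_of_lt hkn)
        gcongr
    _ = 3 / √π := by field_simp
    _ ≤ 2 := by
        rw [div_le_iff₀ (by positivity)]
        linarith

theorem rpow_mul_cutQ_le {n k : ℕ} (hn : 3 ≤ n) (hk : k ≠ 0) (hkn : k < n) :
    (n : ℝ) ^ (3 / 2 : ℝ) * cutQ n k ≤ brownianDensity (k / n) := by
  have hmem : (k : ℝ) / n ∈ Icc (0 : ℝ) 1 :=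
    ⟨by positivity, div_le_one_of_le₀ (by exact_mod_cast hkn.le) n.cast_nonneg⟩
  rw [rpow_mul_cutQ hn hk hkn]
  linarith [mul_le_mul_of_nonneg_right (cutQRatio_le_two hn hk hkn) (brownianDensity_nonneg hmem)]

theorem tendsto_cutQRatio {k : ℕ → ℕ} (hk : Tendsto k atTop atTop)
    (hnk : Tendsto (fun n ↦ n - k n) atTop atTop) :
    Tendsto (fun n ↦ cutQRatio n (k n)) atTop (𝓝 1) := by
  have h_div : Tendsto (fun n : ℕ ↦ (n : ℝ) / (n - 1)) atTop (𝓝 1) := by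
    simpa [sub_eq_add_neg] using tendsto_natCast_div_add_atTop (-1 : ℝ)
  have hS := Stirling.tendsto_stirlingSeq_sqrt_pi
  have h := h_div.mul ((hS.const_mul √π).div ((hS.comp hk).mul (hS.comp hnk)) (by positivity))
  rwa [div_self (by positivity), one_mul] at h

theorem tendsto_rpow_mul_cutQ {k : ℕ → ℕ} {x : ℝ} (hx : x ∈ Ioo (0 : ℝ) 1)
    (hk : Tendsto (fun n ↦ (k n : ℝ) / n) atTop (𝓝 x)) :
    Tendsto (fun n : ℕ ↦ (n : ℝ) ^ (3 / 2 : ℝ) * cutQ n (k n)) atTop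
      (𝓝 (brownianDensity x / 2)) := by
  have k_lt : ∀ᶠ n in atTop, k n < n := by
    filter_upwards [hk.eventually_lt_const hx.2, eventually_gt_atTop 0] with n hlt hn
    exact_mod_cast (div_lt_one (by positivity)).1 hlt
  have k_atTop : Tendsto k atTop atTop := tendsto_atTop_of_tendsto_div hx.1 hk
  have sub_atTop : Tendsto (fun n ↦ n - k n) atTop atTop := by
    refine tendsto_atTop_of_tendsto_div (sub_pos.2 hx.2) ((hk.const_sub 1).congr' ?_)
    filter_upwards [k_lt, eventually_gt_atTop 0] with n hlt hn
    rw [Nat.cast_sub hlt.le]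
    field_simp
  have h := (tendsto_cutQRatio k_atTop sub_atTop).mul
    (((continuousAt_brownianDensity hx).tendsto.comp hk).div_const 2)
  rw [one_mul] at h
  refine h.congr' ?_
  filter_upwards [k_lt, k_atTop.eventually_ne_atTop 0, eventually_ge_atTop 3] with n hlt h0 hn
  exact (rpow_mul_cutQ hn h0 hlt).symm

theorem brownianDensity_mul_self_mul_one_sub_le {u x : ℝ} (hx : x ∈ Ioo (0 : ℝ) 1)
    (hxu : x / 2 ≤ u) (hux : u ≤ x) :
    brownianDensity u * (u * (1 - u)) ≤
      2 / √π * (x ^ (-(1 / 2) : ℝ) * (1 - x) ^ (-(1 / 2) : ℝ)) := by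
  have hx0 : 0 < x := hx.1
  have hx1 : 0 < 1 - x := sub_pos.2 hx.2
  have hu : u ∈ Ioo (0 : ℝ) 1 := ⟨(half_pos hx0).trans_le hxu, hux.trans_lt hx.2⟩
  have rpow_le : u ^ (-(1 / 2) : ℝ) ≤ √2 * x ^ (-(1 / 2) : ℝ) := calc
    u ^ (-(1 / 2) : ℝ) ≤ (x / 2) ^ (-(1 / 2) : ℝ) :=
      rpow_le_rpow_of_nonpos (half_pos hx0) hxu (by norm_num)
    _ = √2 * x ^ (-(1 / 2) : ℝ) := by
      rw [div_rpow hx0.le zero_le_two, rpow_neg zero_le_two, ← sqrt_eq_rpow, div_inv_eq_mul,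
        mul_comm]
  have one_sub_rpow_le : (1 - u) ^ (-(1 / 2) : ℝ) ≤ (1 - x) ^ (-(1 / 2) : ℝ) :=
    rpow_le_rpow_of_nonpos hx1 (by linarith) (by norm_num)
  calc brownianDensity u * (u * (1 - u))
      = √2 / √π * (u ^ (-(1 / 2) : ℝ) * (1 - u) ^ (-(1 / 2) : ℝ)) :=
      brownianDensity_mul_self_mul_one_sub hu
    _ ≤ √2 / √π * (√2 * x ^ (-(1 / 2) : ℝ) * (1 - x) ^ (-(1 / 2) : ℝ)) := by
      have := rpow_nonneg (sub_pos.2 hu.2).le (-(1 / 2))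
      gcongr
    _ = √2 * √2 / √π * (x ^ (-(1 / 2) : ℝ) * (1 - x) ^ (-(1 / 2) : ℝ)) := by ring
    _ = 2 / √π * (x ^ (-(1 / 2) : ℝ) * (1 - x) ^ (-(1 / 2) : ℝ)) := by
      rw [mul_self_sqrt zero_le_two]

theorem natCast_div_mem_Ioo_iff {n k : ℕ} (hkn : k < n) :
    (k : ℝ) / n ∈ Ioo (1 / 2 : ℝ) 1 ↔ n < 2 * k := by
  have hkn' : (k : ℝ) < n := by exact_mod_cast hkn
  have hn : (0 : ℝ) < n := k.cast_nonneg.trans_lt hkn'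
  rw [mem_Ioo, div_lt_div_iff₀ two_pos hn, div_lt_one hn, and_iff_left hkn', one_mul, mul_comm]
  exact_mod_cast Iff.rfl

section Convergence

variable {E : Type*} [NormedAddCommGroup E] [NormedSpace ℝ E] {F f : ℝ → E} {M : ℝ}

theorem norm_rpow_mul_cutQ_smul_le (hF : ∀ x ∈ Ico (0 : ℝ) 1, ‖F x‖ ≤ M * (x * (1 - x))) {n : ℕ}
    (hn : 3 ≤ n) {x : ℝ} (hx : x ∈ Ioo (0 : ℝ) 1) :
    ‖((n : ℝ) ^ (3 / 2 : ℝ) * cutQ n ⌊n * x⌋₊) • F (⌊n * x⌋₊ / n)‖ ≤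
      M * (2 / √π * (x ^ (-(1 / 2) : ℝ) * (1 - x) ^ (-(1 / 2) : ℝ))) := by
  have hx1 : 0 < 1 - x := sub_pos.2 hx.2
  have hM : 0 ≤ M := by linarith [(norm_nonneg (F (1 / 2))).trans (hF (1 / 2) (by norm_num))]
  set k := ⌊n * x⌋₊
  have hu : (k : ℝ) / n ∈ Ico (0 : ℝ) 1 :=
    ⟨by positivity, (floor_mul_div_le hx.1.le n).trans_lt hx.2⟩
  by_cases hk0 : k = 0
  · have F_zero : F 0 = 0 := norm_le_zero_iff.1 (by simpa using hF 0 (by simp))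
    have := hx.1.le
    simp only [hk0, Nat.cast_zero, zero_div, F_zero, smul_zero, norm_zero]
    positivity
  have hkn : k < n := by exact_mod_cast (div_lt_one (by positivity)).1 hu.2
  have coeff_nonneg : 0 ≤ (n : ℝ) ^ (3 / 2 : ℝ) * cutQ n k :=
    mul_nonneg (by positivity) (cutQ_nonneg n k)
  have density_nonneg := brownianDensity_nonneg (Ico_subset_Icc_self hu)
  calc ‖((n : ℝ) ^ (3 / 2 : ℝ) * cutQ n k) • F (k / n)‖
      = (n : ℝ) ^ (3 / 2 : ℝ) * cutQ n k * ‖F (k / n)‖ := by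
        rw [norm_smul, norm_of_nonneg coeff_nonneg]
    _ ≤ brownianDensity (k / n) * (M * (k / n * (1 - k / n))) := by
        gcongr
        exacts [rpow_mul_cutQ_le hn hk0 hkn, hF _ hu]
    _ = M * (brownianDensity (k / n) * (k / n * (1 - k / n))) := by ring
    _ ≤ M * (2 / √π * (x ^ (-(1 / 2) : ℝ) * (1 - x) ^ (-(1 / 2) : ℝ))) := by
        refine mul_le_mul_of_nonneg_left ?_ hM
        exact brownianDensity_mul_self_mul_one_sub_le hx (half_le_floor_mul_div hk0)
          (floor_mul_div_le hx.1.le n)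

theorem tendsto_sqrt_smul_sum_cutQ_smul [CompleteSpace E]
    (hF : ∀ x ∈ Ico (0 : ℝ) 1, ‖F x‖ ≤ M * (x * (1 - x)))
    (hFc : ∀ᵐ x : ℝ, x ∈ Ioo (0 : ℝ) 1 → ContinuousAt F x) :
    Tendsto (fun n : ℕ ↦ √n • ∑ k ∈ Finset.range n, cutQ n k • F (k / n)) atTop
      (𝓝 ((1 / 2 : ℝ) • ∫ x in (0 : ℝ)..1, brownianDensity x • F x)) := by
  have smul_eq (n k : ℕ) : (n : ℝ) • √n • cutQ n k • F (k / n) =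
      ((n : ℝ) ^ (3 / 2 : ℝ) * cutQ n k) • F (k / n) := by
    simp only [smul_smul, ← mul_sqrt_eq_rpow n.cast_nonneg, mul_assoc]
  simp only [Finset.smul_sum, ← intervalIntegral.integral_smul]
  refine tendsto_sum_range_of_dominated
    (fun x ↦ M * (2 / √π * (x ^ (-(1 / 2) : ℝ) * (1 - x) ^ (-(1 / 2) : ℝ)))) ?_ ?_ ?_
  · have h := intervalIntegrable_rpow_mul_one_sub_rpow (a := -(1 / 2)) (b := -(1 / 2))
      (by norm_num) (by norm_num)
    exact (h.const_mul _).const_mul M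
  · filter_upwards [eventually_ge_atTop 3] with n hn x hx
    rw [smul_eq]
    exact norm_rpow_mul_cutQ_smul_le hF hn hx
  · filter_upwards [hFc] with x hFx hx
    have h_floor := tendsto_floor_mul_div hx.1.le
    simp only [smul_eq, smul_smul (1 / 2 : ℝ), one_div_mul_eq_div]
    exact (tendsto_rpow_mul_cutQ hx h_floor).smul ((hFx hx).tendsto.comp h_floor)

theorem stmt13_general [CompleteSpace E] (hfM : ∀ x ∈ Ioo (1 / 2 : ℝ) 1, ‖f x‖ ≤ M)
    (hfc : ∀ᵐ x : ℝ, x ∈ Ioo (1 / 2 : ℝ) 1 → ContinuousAt f x) :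
    Tendsto (fun n : ℕ ↦ √n • ∑ k ∈ (Finset.range n).filter (fun k ↦ n < 2 * k),
        (cutQ n k * (1 - (k : ℝ) / n)) • f ((k : ℝ) / n)) atTop
      (𝓝 ((1 / 2 : ℝ) • ∫ x in Icc (1 / 2 : ℝ) 1, ((1 - x) * brownianDensity x) • f x)) := by
  set F : ℝ → E := (Ioo (1 / 2 : ℝ) 1).indicator fun x ↦ (1 - x) • f x with hF
  have F_le (x : ℝ) (hx : x ∈ Ico (0 : ℝ) 1) : ‖F x‖ ≤ 2 * M * (x * (1 - x)) := by
    have hx1 : 0 ≤ 1 - x := sub_nonneg.2 hx.2.le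
    have hM : 0 ≤ M := (norm_nonneg _).trans (hfM (3 / 4) (by norm_num))
    by_cases h : x ∈ Ioo (1 / 2 : ℝ) 1
    · calc ‖F x‖ = (1 - x) * ‖f x‖ := by rw [hF, indicator_of_mem h, norm_smul, norm_of_nonneg hx1]
        _ ≤ (1 - x) * (2 * x * M) := by
          gcongr
          exact (hfM x h).trans (le_mul_of_one_le_left hM (by linarith [h.1]))
        _ = 2 * M * (x * (1 - x)) := by ring
    · have := hx.1
      rw [hF, indicator_of_notMem h, norm_zero]
      positivity
  have F_continuousAt : ∀ᵐ x : ℝ, x ∈ Ioo (0 : ℝ) 1 → ContinuousAt F x := by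
    have notMem_frontier : ∀ᵐ x : ℝ, x ∉ frontier (Ioo (1 / 2 : ℝ) 1) :=
      measure_eq_zero_iff_ae_notMem.1 ((convex_Ioo _ _).addHaar_frontier volume)
    filter_upwards [hfc, notMem_frontier] with x hfx hx _
    exact continuousAt_indicator_of_notMem_frontier hx fun h ↦
      (continuousAt_const.sub continuousAt_id).smul (hfx h)
  have term_eq {n k : ℕ} (hk : k ∈ Finset.range n) : cutQ n k • F (k / n) =
      if n < 2 * k then (cutQ n k * (1 - (k : ℝ) / n)) • f ((k : ℝ) / n) else 0 := by
    have mem_iff := natCast_div_mem_Ioo_iff (Finset.mem_range.1 hk)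
    simp only [hF, indicator_apply, mem_iff, smul_ite, smul_smul, smul_zero]
  have integral_eq : ∫ x in (0 : ℝ)..1, brownianDensity x • F x =
      ∫ x in Icc (1 / 2 : ℝ) 1, ((1 - x) * brownianDensity x) • f x := by
    have inter_eq : Ioc (0 : ℝ) 1 ∩ Ioo (1 / 2) 1 = Ioo (1 / 2) 1 :=
      inter_eq_right.2 fun x hx ↦ ⟨by linarith [hx.1], hx.2.le⟩
    simp only [hF, ← indicator_smul_apply, smul_smul, mul_comm (brownianDensity _)]
    rw [intervalIntegral.integral_of_le zero_le_one, setIntegral_indicator measurableSet_Ioo,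
      inter_eq, integral_Icc_eq_integral_Ioo]
  simpa only [Finset.sum_congr rfl fun _ ↦ term_eq, ← Finset.sum_filter, integral_eq] using
    tendsto_sqrt_smul_sum_cutQ_smul F_le F_continuousAt

end Convergence

/-- the splitting probabilities of the cut-tree of a uniform Cayley tree
satisfy Hypothesis (H) with `γ = 1/2` and `ν = ν_Br/2`: for every continuous
`f : [1/2,1] → ℝ`, `√n · Σ_{n/2<k≤n−1} q_n(k,n−k)(1−k/n) f(k/n)` converges to
`(1/2)·∫_{1/2}^{1} (1−x) f(x) √2/(√π x^{3/2}(1−x)^{3/2}) dx`. -/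
theorem stmt13 :
    ∀ f : ℝ → ℝ, ContinuousOn f (Set.Icc (1/2 : ℝ) 1) →
      Tendsto (fun n : ℕ => Real.sqrt n *
          ∑ k ∈ (Finset.range n).filter (fun k => n < 2 * k),
            cutQ n k * (1 - (k : ℝ) / n) * f ((k : ℝ) / n))
        atTop
        (nhds ((1/2) * ∫ x in Set.Icc (1/2 : ℝ) 1,
          (1 - x) * f x * (Real.sqrt 2 / (Real.sqrt π * x ^ ((3:ℝ)/2) * (1 - x) ^ ((3:ℝ)/2))))) := by
  intro f hf
  obtain ⟨M, hM⟩ := isCompact_Icc.exists_bound_of_continuousOn hf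
  simpa only [smul_eq_mul, mul_right_comm (1 - _ : ℝ), brownianDensity] using
    stmt13_general (fun x hx ↦ hM x (Ioo_subset_Icc_self hx))
      (.of_forall fun x hx ↦ hf.continuousAt (Icc_mem_nhds hx.1 hx.2))
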